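/- Theorem 1 (full-state attitude observer with guaranteed performance, noise-free measurements): Let J ∈ ℝ^{3×3} be symmetric positive definite and let ℓ_o > 0, k_o ≥ ℓ_o, γ_o > 0, ξ_o⁰ > ξ_o^∞ > 0, δ_o > 0. Let Q, Q̂ : [0,∞) → S³ and Ω, Ω̂, τ : [0,∞) → ℝ³ be differentiable and satisfy the true dynamics Q̇ = ½ Q⊙(0,Ω), J Ω̇ = (JΩ)×Ω + τ, and the observer dynamics Q̂̇ = ½ Q̂⊙(0, Ω̂ + W_Ω), Ĵ Ω̂̇ = (Ĵ Ω̂)×Ω̂ + τ̂ + Ĵ(Ω̂ × W_Ω) + W_τ, where Q̃_o = Q̂⁻¹⊙Q = (q̃_{o0}, q̃_o), Ĵ = R_{Q̃_o} J R_{Q̃_o}ᵀ, τ̂ = R_{Q̃_o} τ, e_o = 1 − q̃_{o0}, ξ_o(t) = (ξ_o⁰ − ξ_o^∞)exp(−ℓ_o t) + ξ_o^∞, E_o = ½ ln((δ_o + e_o/ξ_o)/(δ_o − e_o/ξ_o)), Δ_o = (1/(2ξ_o))(1/(δ_o + e_o/ξ_o) + 1/(δ_o − e_o/ξ_o)), W_Ω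 = −k_o(E_oΔ_o + 1) R_{Q̃_o} q̃_o, W_τ = −γ_o(E_oΔ_o + 1) R_{Q̃_o} q̃_o. Assume Ω is bounded on [0,∞), δ_o > e_o(0), ξ_o⁰ > e_o(0), and that for all t ≥ 0 one has q̃_{o0}(t) ≥ 0 and 0 ≤ e_o(t) < δ_o ξ_o(t). Then: (1) E_o, e_o and Ω̂ are bounded on [0,∞); and (2) E_o(t) → 0, e_o(t) → 0, q̃_o(t) → 0 ∈ ℝ³, q̃_{o0}(t) → 1, and the angular-velocity estimation error Ω̃_o(t) = Ω(t) − R_{Q̃_o(t)}ᵀ Ω̂(t) → 0 as t → ∞. -/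

import Mathlib

open Matrix Filter

noncomputable section

abbrev V3 := Fin 3 → ℝ
abbrev Quat4 := ℝ × V3

/-- Quaternion product `Q₁ ⊙ Q₂`. -/
def qmul (p q : Quat4) : Quat4 :=
  (p.1 * q.1 - p.2 ⬝ᵥ q.2, p.1 • q.2 + q.1 • p.2 + crossProduct p.2 q.2)

/-- Quaternion inverse (conjugate) of a unit quaternion. -/
def qinv (p : Quat4) : Quat4 := (p.1, -p.2)

/-- Pure quaternion `(0, v)`. -/
def qpure (v : V3) : Quat4 := ((0 : ℝ), v)

/-- `Q ∈ S³`. -/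
def isUnitQuat (p : Quat4) : Prop := p.1 ^ 2 + p.2 ⬝ᵥ p.2 = 1

/-- Skew symmetric matrix `[v]ₓ` with `skewM v *ᵥ y = v ×₃ y`. -/
def skewM (v : V3) : Matrix (Fin 3) (Fin 3) ℝ :=
  !![0, -v 2, v 1; v 2, 0, -v 0; -v 1, v 0, 0]

/-- Rotation matrix `R_Q` associated with a unit quaternion. -/
def rotQ (p : Quat4) : Matrix (Fin 3) (Fin 3) ℝ :=
  (p.1 ^ 2 - p.2 ⬝ᵥ p.2) • (1 : Matrix (Fin 3) (Fin 3) ℝ)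
    + (2 : ℝ) • vecMulVec p.2 p.2 + (2 * p.1) • skewM p.2

/-- Euclidean norm on ℝ³. -/
def vnorm (v : V3) : ℝ := Real.sqrt (v ⬝ᵥ v)

/-- Quaternion norm. -/
def qnorm (p : Quat4) : ℝ := Real.sqrt (p.1 ^ 2 + p.2 ⬝ᵥ p.2)

/-- `S(Ω) = [JΩ]ₓ − J[Ω]ₓ − [Ω]ₓJ`. -/
def Smat (J : Matrix (Fin 3) (Fin 3) ℝ) (Ω : V3) : Matrix (Fin 3) (Fin 3) ℝ :=
  skewM (J *ᵥ Ω) - J * skewM Ω - skewM Ω * J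

/-!
Let `K` be the kinetic energy of the angular-velocity error `Ω̃_o`, measured with the inertia matrix
`J`, and let `q̃_o` be the vector part of the attitude error. The gyroscopic torques do no work on
`Ω̃_o`, so `K` grows only through the power of the correction torque, proportional to `Ω̃_o · q̃_o`,
and this power cancels in the derivative of `U = K - γ_o E_o² - 2 γ_o e_o`, which satisfies
`U' ≤ -c e_o` for some `c > 0`.

`U` is indefinite, so a priori only `K ≤ C + γ_o E_o²` follows: the perturbation `Ω̃_o · q̃_o` of
the attitude error is at most linear in `E_o`. The correction term, on the other hand, *increases*
`e_o` and is quadratic in `E_o`. A large `E_o` would therefore keep growing while `e_o` increases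
at rate at least one, which is impossible since `e_o ≤ 2`. Hence `E_o` is bounded, and so are `K`
and the derivatives of `e_o` and `Ω̃_o`. Barbalat's lemma applied to `U` now gives `e_o → 0`, and
applied to `2 q̃_o`, whose derivative is `Ω̃_o` up to a vanishing term, it gives `Ω̃_o → 0`.
-/

open scoped Quaternion

/-! ### Quaternions and rotations -/

/-- The coordinate isomorphism from the encoding `ℝ × ℝ³` of quaternions to Mathlib's algebra
`ℍ[ℝ]`, through which `qmul` and `qinv` become multiplication and conjugation. -/
def toQuaternion : Quat4 ≃ₗ[ℝ] ℍ[ℝ] where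
  toFun p := ⟨p.1, p.2 0, p.2 1, p.2 2⟩
  invFun q := (q.re, ![q.imI, q.imJ, q.imK])
  map_add' _ _ := rfl
  map_smul' _ _ := rfl
  left_inv p := Prod.ext rfl (by ext i; fin_cases i <;> rfl)
  right_inv _ := rfl

@[simp] theorem re_toQuaternion (p : Quat4) : (toQuaternion p).re = p.1 := rfl

@[simp] theorem imI_toQuaternion (p : Quat4) : (toQuaternion p).imI = p.2 0 := rfl

@[simp] theorem imJ_toQuaternion (p : Quat4) : (toQuaternion p).imJ = p.2 1 := rfl

@[simp] theorem imK_toQuaternion (p : Quat4) : (toQuaternion p).imK = p.2 2 := rfl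

/-- The embedding `v ↦ (0, v)` of `ℝ³` into `ℍ[ℝ]`, the linear form of `qpure`. -/
def pureQuaternion : V3 →ₗ[ℝ] ℍ[ℝ] :=
  toQuaternion.toLinearMap ∘ₗ LinearMap.inr ℝ ℝ V3

theorem pureQuaternion_apply (v : V3) : pureQuaternion v = toQuaternion (qpure v) := rfl

theorem pureQuaternion_injective : Function.Injective pureQuaternion :=
  toQuaternion.injective.comp LinearMap.inr_injective

theorem toQuaternion_qmul (p q : Quat4) :
    toQuaternion (qmul p q) = toQuaternion p * toQuaternion q := by
  ext <;> simp [qmul, cross_apply, dotProduct, Fin.sum_univ_three, vecHead, vecTail] <;> ring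

theorem toQuaternion_qinv (p : Quat4) : toQuaternion (qinv p) = star (toQuaternion p) := by
  ext <;> simp [qinv]

theorem isUnitQuat_iff_mem_unitary {p : Quat4} :
    isUnitQuat p ↔ toQuaternion p ∈ unitary ℍ[ℝ] := by
  rw [Unitary.mem_iff, Quaternion.star_mul_self, Quaternion.self_mul_star, and_self, isUnitQuat,
    ← Quaternion.coe_one, Quaternion.coe_inj, Quaternion.normSq_def']
  simp [dotProduct, Fin.sum_univ_three, add_assoc, sq]

theorem isUnitQuat_qmul_qinv {p q : Quat4} (hp : isUnitQuat p) (hq : isUnitQuat q) :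
    isUnitQuat (qmul (qinv p) q) := by
  rw [isUnitQuat_iff_mem_unitary] at *
  rw [toQuaternion_qmul, toQuaternion_qinv]
  exact mul_mem (Unitary.star_mem hp) hq

theorem pureQuaternion_cross (x y : V3) :
    pureQuaternion (crossProduct x y) = (1 / 2 : ℝ) •
      (pureQuaternion x * pureQuaternion y - pureQuaternion y * pureQuaternion x) := by
  ext <;> simp [pureQuaternion_apply, qpure, cross_apply] <;> ring

theorem pureQuaternion_rotQ_transpose_mulVec (p : Quat4) (x : V3) :
    pureQuaternion ((rotQ p)ᵀ *ᵥ x)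
      = star (toQuaternion p) * pureQuaternion x * toQuaternion p := by
  ext <;>
  · simp [pureQuaternion_apply, qpure, rotQ, skewM, mulVec, dotProduct,
      Fin.sum_univ_three, vecMulVec_apply]
    ring

theorem rotQ_mul_transpose {p : Quat4} (hp : isUnitQuat p) : rotQ p * (rotQ p)ᵀ = 1 := by
  simp only [isUnitQuat, dotProduct, Fin.sum_univ_three] at hp
  ext i j
  fin_cases i <;> fin_cases j <;>
  · simp [rotQ, skewM, Matrix.mul_apply, dotProduct, Fin.sum_univ_three, vecMulVec_apply]
    grobner

theorem rotQ_transpose_mul {p : Quat4} (hp : isUnitQuat p) : (rotQ p)ᵀ * rotQ p = 1 :=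
  mul_eq_one_comm.mp (rotQ_mul_transpose hp)

theorem rotQ_transpose_mulVec_cross {p : Quat4} (hp : isUnitQuat p) (x y : V3) :
    (rotQ p)ᵀ *ᵥ crossProduct x y
      = crossProduct ((rotQ p)ᵀ *ᵥ x) ((rotQ p)ᵀ *ᵥ y) := by
  let u : unitary ℍ[ℝ] := ⟨toQuaternion p, isUnitQuat_iff_mem_unitary.mp hp⟩
  have hconj (z : V3) : pureQuaternion ((rotQ p)ᵀ *ᵥ z)
      = Unitary.conjStarAlgAut ℝ ℍ[ℝ] (star u) (pureQuaternion z) := by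
    rw [pureQuaternion_rotQ_transpose_mulVec, Unitary.conjStarAlgAut_star_apply]
  apply pureQuaternion_injective
  simp only [pureQuaternion_cross, hconj, map_smul, map_sub, map_mul]

/-! ### Kinematics of the attitude error -/

theorem hasDerivAt_toQuaternion_iff {P : ℝ → Quat4} {P' : Quat4} {t : ℝ} :
    HasDerivAt (fun u => toQuaternion (P u)) (toQuaternion P') t ↔ HasDerivAt P P' t :=
  ⟨fun h => by simpa [Function.comp_def] using
      toQuaternion.symm.toContinuousLinearEquiv.hasFDerivAt.comp_hasDerivAt t h,
    fun h => toQuaternion.toContinuousLinearEquiv.hasFDerivAt.comp_hasDerivAt t h⟩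

theorem hasDerivAt_pureQuaternion_iff {x : ℝ → V3} {x' : V3} {t : ℝ} :
    HasDerivAt (fun u => pureQuaternion (x u)) (pureQuaternion x') t ↔ HasDerivAt x x' t :=
  hasDerivAt_toQuaternion_iff.trans
    ⟨fun h => (ContinuousLinearMap.snd ℝ ℝ V3).hasFDerivAt.comp_hasDerivAt t h,
      fun h => (hasDerivAt_const t 0).prodMk h⟩

instance : StarModule ℝ ℍ[ℝ] :=
  ⟨fun r q => by rw [Quaternion.star_smul, star_trivial r]⟩

theorem star_pureQuaternion (v : V3) : star (pureQuaternion v) = -pureQuaternion v := by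
  ext <;> simp [pureQuaternion_apply, qpure]

theorem hasDerivAt_qmul_qinv {p q : ℝ → Quat4} {a b : V3} {t : ℝ}
    (hp : isUnitQuat (p t)) (hq : isUnitQuat (q t))
    (hp' : HasDerivAt p ((1 / 2 : ℝ) • qmul (p t) (qpure b)) t)
    (hq' : HasDerivAt q ((1 / 2 : ℝ) • qmul (q t) (qpure a)) t) :
    HasDerivAt (fun u => qmul (qinv (p u)) (q u))
      ((1 / 2 : ℝ) • qmul (qmul (qinv (p t)) (q t))
        (qpure (a - (rotQ (qmul (qinv (p t)) (q t)))ᵀ *ᵥ b))) t := by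
  have hunit := (isUnitQuat_iff_mem_unitary.mp (isUnitQuat_qmul_qinv hp hq)).2
  have hconj (c B : ℍ[ℝ]) (hc : c * star c = 1) : c * (star c * B * c) = B * c := by
    rw [← mul_assoc, ← mul_assoc, hc, one_mul]
  rw [← hasDerivAt_toQuaternion_iff] at hp' hq' ⊢
  simp only [map_smul, toQuaternion_qmul, toQuaternion_qinv, ← pureQuaternion_apply, map_sub,
    pureQuaternion_rotQ_transpose_mulVec] at hp' hq' hunit ⊢
  refine (hp'.star.mul hq').congr_deriv ?_
  rw [mul_sub, hconj _ _ hunit, star_smul, star_mul, star_pureQuaternion, star_trivial]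
  simp only [smul_mul_assoc, mul_smul_comm, mul_assoc, neg_mul]
  module

theorem hasDerivAt_rotQ_transpose_mulVec {P : ℝ → Quat4} {x : ℝ → V3} {η x' : V3} {t : ℝ}
    (hP : HasDerivAt P ((1 / 2 : ℝ) • qmul (P t) (qpure η)) t) (hx : HasDerivAt x x' t) :
    HasDerivAt (fun u => (rotQ (P u))ᵀ *ᵥ x u)
      ((rotQ (P t))ᵀ *ᵥ x' - crossProduct η ((rotQ (P t))ᵀ *ᵥ x t)) t := by
  rw [← hasDerivAt_toQuaternion_iff] at hP
  rw [← hasDerivAt_pureQuaternion_iff] at hx ⊢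
  simp only [map_smul, toQuaternion_qmul, ← pureQuaternion_apply, map_sub, pureQuaternion_cross,
    pureQuaternion_rotQ_transpose_mulVec] at hP hx ⊢
  refine ((hP.star.fun_mul hx).fun_mul hP).congr_deriv ?_
  rw [star_smul, star_mul, star_pureQuaternion, star_trivial]
  simp only [smul_mul_assoc, mul_smul_comm, mul_assoc, neg_mul, add_mul]
  module

theorem hasDerivAt_dotProduct {ι : Type*} [Fintype ι] {x y : ℝ → ι → ℝ} {x' y' : ι → ℝ} {t : ℝ}
    (hx : HasDerivAt x x' t) (hy : HasDerivAt y y' t) :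
    HasDerivAt (fun u => x u ⬝ᵥ y u) (x' ⬝ᵥ y t + x t ⬝ᵥ y') t := by
  simpa only [dotProduct, ← Finset.sum_add_distrib] using HasDerivAt.fun_sum fun i _ =>
    (hasDerivAt_pi.mp hx i).fun_mul (hasDerivAt_pi.mp hy i)

/-! ### Asymptotics of differentiable functions on a half-line -/

section Asymptotics

theorem tendsto_add_const_sub_self {G : Type*} [AddGroup G] [TopologicalSpace G]
    [IsTopologicalAddGroup G] {F : ℝ → G} {l : G} (hl : Tendsto F atTop (nhds l)) (d : ℝ) :
    Tendsto (fun t => F (t + d) - F t) atTop (nhds 0) := by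
  simpa using (hl.comp (tendsto_atTop_add_const_right atTop d tendsto_id)).sub hl

variable {E : Type*} [NormedAddCommGroup E] [NormedSpace ℝ E] {a : ℝ}

theorem sub_le_mul_sub_of_hasDerivAt_le {f f' : ℝ → ℝ} {b C : ℝ} (hab : a ≤ b)
    (hf : ∀ x ∈ Set.Icc a b, HasDerivAt f (f' x) x) (hC : ∀ x ∈ Set.Icc a b, f' x ≤ C) :
    f b - f a ≤ C * (b - a) :=
  (convex_Icc a b).image_sub_le_mul_sub_of_deriv_le
    (fun x hx => (hf x hx).continuousAt.continuousWithinAt)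
    (fun x hx => (hf x (interior_subset hx)).differentiableAt.differentiableWithinAt)
    (fun x hx => (hf x (interior_subset hx)).deriv.trans_le (hC x (interior_subset hx)))
    a (Set.left_mem_Icc.mpr hab) b (Set.right_mem_Icc.mpr hab) hab

theorem antitoneOn_Ici_of_hasDerivAt_nonpos {f f' : ℝ → ℝ}
    (hf : ∀ t ≥ a, HasDerivAt f (f' t) t) (hf' : ∀ t ≥ a, f' t ≤ 0) :
    AntitoneOn f (Set.Ici a) := by
  intro s hs t _ hst
  have := sub_le_mul_sub_of_hasDerivAt_le hst (fun x hx => hf x (hx.1.trans' hs))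
    (fun x hx => hf' x (hx.1.trans' hs))
  linarith

theorem uniformContinuousOn_Ici_of_norm_hasDerivAt_le {f f' : ℝ → E} {C : ℝ}
    (hf : ∀ t ≥ a, HasDerivAt f (f' t) t) (hC : ∀ t ≥ a, ‖f' t‖ ≤ C) :
    UniformContinuousOn f (Set.Ici a) :=
  ((convex_Ici a).lipschitzOnWith_of_nnnorm_hasDerivWithin_le (C := C.toNNReal)
    (fun t ht => (hf t ht).hasDerivWithinAt)
    (fun t ht => NNReal.le_toNNReal_of_coe_le (hC t ht))).uniformContinuousOn

theorem exists_tendsto_atTop_of_antitoneOn_Ici {f : ℝ → ℝ} {m : ℝ}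
    (hf : AntitoneOn f (Set.Ici a)) (hm : ∀ t ≥ a, m ≤ f t) :
    ∃ l, Tendsto f atTop (nhds l) := by
  have hanti : Antitone fun t => f (max t a) := fun s t hst =>
    hf (Set.mem_Ici.mpr (le_max_right _ _)) (Set.mem_Ici.mpr (le_max_right _ _))
      (max_le_max_right a hst)
  refine ⟨_, (tendsto_atTop_ciInf hanti
    ⟨m, Set.forall_mem_range.mpr fun t => hm _ (le_max_right _ _)⟩).congr' ?_⟩
  filter_upwards [eventually_ge_atTop a] with t ht
  rw [max_eq_left ht]

/-- Barbalat's lemma, with a vanishing perturbation of the derivative. -/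
theorem tendsto_zero_of_hasDerivAt_add {F g h : ℝ → E} {l : E}
    (hF : ∀ t ≥ a, HasDerivAt F (g t + h t) t) (hl : Tendsto F atTop (nhds l))
    (hg : UniformContinuousOn g (Set.Ici a)) (hh : Tendsto h atTop (nhds 0)) :
    Tendsto g atTop (nhds 0) := by
  rw [Metric.tendsto_nhds]
  intro ε hε
  obtain ⟨d, hd, hgd⟩ := Metric.uniformContinuousOn_iff_le.mp hg (ε / 4) (by positivity)
  have hh' := eventually_forall_ge_atTop.mpr
    (hh.norm.eventually (ge_mem_nhds (by simpa using by positivity : ‖(0 : E)‖ < ε / 4)))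
  have hF' := (tendsto_add_const_sub_self hl d).norm.eventually
    (gt_mem_nhds (by simpa using by positivity : ‖(0 : E)‖ < ε / 2 * d))
  filter_upwards [hF', hh', eventually_ge_atTop a] with t hFt hht hta
  have hder (u : ℝ) (hu : u ∈ Set.Icc t (t + d)) :
      HasDerivWithinAt (fun u => F u - u • g t) (g u + h u - g t) (Set.Icc t (t + d)) u := by
    simpa using ((hF u (hta.trans hu.1)).fun_sub
      ((hasDerivAt_id u).smul_const (g t))).hasDerivWithinAt
  have hbound (u : ℝ) (hu : u ∈ Set.Icc t (t + d)) : ‖g u + h u - g t‖ ≤ ε / 2 := by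
    have hgu := hgd u (hta.trans hu.1) t hta
      (by rw [Real.dist_eq, abs_of_nonneg] <;> linarith [hu.1, hu.2])
    rw [dist_eq_norm] at hgu
    calc ‖g u + h u - g t‖ = ‖(g u - g t) + h u‖ := by congr 1; abel
      _ ≤ ‖g u - g t‖ + ‖h u‖ := norm_add_le _ _
      _ ≤ ε / 2 := by linarith [hht u hu.1]
  have hmean := (convex_Icc t (t + d)).norm_image_sub_le_of_norm_hasDerivWithin_le hder hbound
    (Set.left_mem_Icc.mpr (by linarith)) (Set.right_mem_Icc.mpr (by linarith))
  have hlt : d * ‖g t‖ < d * ε := by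
    calc d * ‖g t‖ = ‖d • g t‖ := by rw [norm_smul, Real.norm_of_nonneg hd.le]
      _ = ‖(F (t + d) - F t) - (F (t + d) - (t + d) • g t - (F t - t • g t))‖ := by
        congr 1; module
      _ ≤ ‖F (t + d) - F t‖ + ‖F (t + d) - (t + d) • g t - (F t - t • g t)‖ := norm_sub_le _ _
      _ < ε / 2 * d + ε / 2 * ‖t + d - t‖ := add_lt_add_of_lt_of_le hFt hmean
      _ = d * ε := by rw [add_sub_cancel_left, Real.norm_of_nonneg hd.le]; ring
  rw [dist_zero_right]
  exact lt_of_mul_lt_mul_left hlt hd.le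

theorem tendsto_zero_of_hasDerivAt_le_neg {V V' g : ℝ → ℝ} {m : ℝ}
    (hV : ∀ t ≥ a, HasDerivAt V (V' t) t) (hV' : ∀ t ≥ a, V' t ≤ -g t) (hm : ∀ t ≥ a, m ≤ V t)
    (hg0 : ∀ t ≥ a, 0 ≤ g t) (hg : UniformContinuousOn g (Set.Ici a)) :
    Tendsto g atTop (nhds 0) := by
  obtain ⟨l, hl⟩ := exists_tendsto_atTop_of_antitoneOn_Ici (antitoneOn_Ici_of_hasDerivAt_nonpos hV
    fun t ht => (hV' t ht).trans (neg_nonpos.mpr (hg0 t ht))) hm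
  rw [Metric.tendsto_nhds]
  intro ε hε
  obtain ⟨d, hd, hgd⟩ := Metric.uniformContinuousOn_iff_le.mp hg (ε / 2) (by positivity)
  have hVshift := (tendsto_add_const_sub_self hl d).eventually
    (lt_mem_nhds (by simpa using by positivity : -(ε / 2 * d) < 0))
  filter_upwards [hVshift, eventually_ge_atTop a] with t hVt hta
  have hbound (u : ℝ) (hu : u ∈ Set.Icc t (t + d)) : V' u ≤ ε / 2 - g t := by
    have hgu := hgd u (hta.trans hu.1) t hta
      (by rw [Real.dist_eq, abs_of_nonneg] <;> linarith [hu.1, hu.2])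
    linarith [(abs_le.mp hgu).1, hV' u (hta.trans hu.1)]
  have hmean := sub_le_mul_sub_of_hasDerivAt_le (by linarith : t ≤ t + d)
    (fun u hu => hV u (hta.trans hu.1)) hbound
  rw [Real.dist_0_eq_abs, abs_of_nonneg (hg0 t hta)]
  nlinarith

theorem le_of_bddAbove_of_le_hasDerivAt {e e' f f' : ℝ → ℝ} {c C M : ℝ} (hc : 0 < c)
    (he : ∀ t ≥ a, HasDerivAt e (e' t) t) (hf : ∀ t ≥ a, HasDerivAt f (f' t) t)
    (hC : ∀ t ≥ a, e t ≤ C) (he' : ∀ t ≥ a, M ≤ f t → c ≤ e' t)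
    (hf' : ∀ t ≥ a, f t = M → 0 < f' t) : ∀ t ≥ a, f t ≤ M := by
  intro t ht
  by_contra! hlt
  set T := (C - e t + 1) / c
  have hT : 0 ≤ T := div_nonneg (by linarith [hC t ht]) hc.le
  have hstay (x : ℝ) (hx : x ∈ Set.Icc t (t + T)) : M ≤ f x :=
    neg_le_neg_iff.mp <| image_le_of_deriv_right_lt_deriv_boundary (f := fun x => -f x)
      (f' := fun x => -f' x) (B := fun _ => -M) (B' := fun _ => 0)
      (fun x hx => (hf x (ht.trans hx.1)).neg.continuousAt.continuousWithinAt)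
      (fun x hx => (hf x (ht.trans hx.1)).neg.hasDerivWithinAt)
      (neg_le_neg hlt.le) (fun x => hasDerivAt_const x (-M))
      (fun x hx hxM => neg_neg_of_pos (hf' x (ht.trans hx.1) (neg_injective hxM))) hx
  have hgrow := sub_le_mul_sub_of_hasDerivAt_le (f := fun x => -e x) (C := -c)
    (by linarith : t ≤ t + T) (fun x hx => (he x (ht.trans hx.1)).neg)
    (fun x hx => neg_le_neg (he' x (ht.trans hx.1) (hstay x hx)))
  have hcT : c * T = C - e t + 1 := mul_div_cancel₀ _ hc.ne'
  linarith [hC (t + T) (by linarith)]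

end Asymptotics

/-! ### The transformed error -/

section TransformedError

/-- The transformed error `E_o = ½ ln ((δ_o + e_o/ξ_o) / (δ_o - e_o/ξ_o))`, which is finite as long
as the error `e` stays in the envelope `|e| < δ * ξ` and blows up on its boundary. -/
def transformedError (δ ξ e : ℝ) : ℝ := 1 / 2 * Real.log ((δ + e / ξ) / (δ - e / ξ))

/-- The factor `Δ_o`, the partial derivative of `transformedError δ ξ e` in `e`. -/
def transformedErrorGain (δ ξ e : ℝ) : ℝ :=
  1 / (2 * ξ) * (1 / (δ + e / ξ) + 1 / (δ - e / ξ))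

/-- The common factor `E_o Δ_o + 1` of the two correction terms of the observer. -/
def correctionGain (δ ξ e : ℝ) : ℝ := transformedError δ ξ e * transformedErrorGain δ ξ e + 1

variable {δ ξ e : ℝ}

theorem transformedError_eq (hξ : ξ ≠ 0) :
    transformedError δ ξ e = 1 / 2 * Real.log ((δ * ξ + e) / (δ * ξ - e)) := by
  rw [transformedError, ← mul_div_mul_right (δ + e / ξ) _ hξ, add_mul, sub_mul,
    div_mul_cancel₀ _ hξ]

theorem transformedErrorGain_eq (hξ : ξ ≠ 0) :
    transformedErrorGain δ ξ e = 1 / 2 * (1 / (δ * ξ + e) + 1 / (δ * ξ - e)) := by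
  have h (c : ℝ) : 1 / (c * ξ) = 1 / ξ * (1 / c) := by rw [one_div_mul_one_div_rev]
  have hadd : δ * ξ + e = (δ + e / ξ) * ξ := by field_simp
  have hsub : δ * ξ - e = (δ - e / ξ) * ξ := by field_simp
  rw [hadd, hsub, h, h, transformedErrorGain, ← one_div_mul_one_div]
  ring

theorem hasDerivAt_transformedError {ξ e : ℝ → ℝ} {ξ' e' t : ℝ} (he : HasDerivAt e e' t)
    (hξ : HasDerivAt ξ ξ' t) (hξ0 : 0 < ξ t) (he0 : 0 ≤ e t) (hlt : e t < δ * ξ t) :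
    HasDerivAt (fun u => transformedError δ (ξ u) (e u))
      (transformedErrorGain δ (ξ t) (e t) * (e' - e t * ξ' / ξ t)) t := by
  have hadd : 0 < δ * ξ t + e t := by linarith
  have hsub : 0 < δ * ξ t - e t := by linarith
  have hlog := (((((hξ.const_mul δ).fun_add he).fun_div ((hξ.const_mul δ).fun_sub he) hsub.ne').log
    (div_pos hadd hsub).ne').const_mul (1 / 2))
  refine (hlog.congr_of_eventuallyEq ?_).congr_deriv ?_
  · filter_upwards [hξ.continuousAt.eventually_ne hξ0.ne'] with u hu using transformedError_eq hu
  · rw [transformedErrorGain_eq hξ0.ne']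
    field_simp
    ring

theorem transformedError_nonneg (hξ : 0 < ξ) (he : 0 ≤ e) (hlt : e < δ * ξ) :
    0 ≤ transformedError δ ξ e := by
  rw [transformedError_eq hξ.ne']
  have hratio : 1 ≤ (δ * ξ + e) / (δ * ξ - e) := by
    rw [one_le_div (by linarith)]
    linarith
  exact mul_nonneg (by norm_num) (Real.log_nonneg hratio)

theorem transformedErrorGain_pos (hξ : 0 < ξ) (he : 0 ≤ e) (hlt : e < δ * ξ) :
    0 < transformedErrorGain δ ξ e := by
  rw [transformedErrorGain_eq hξ.ne']
  exact mul_pos one_half_pos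
    (add_pos (one_div_pos.mpr (by linarith)) (one_div_pos.mpr (sub_pos.mpr hlt)))

theorem one_le_correctionGain (hξ : 0 < ξ) (he : 0 ≤ e) (hlt : e < δ * ξ) :
    1 ≤ correctionGain δ ξ e :=
  le_add_of_nonneg_left
    (mul_nonneg (transformedError_nonneg hξ he hlt) (transformedErrorGain_pos hξ he hlt).le)

theorem transformedError_le_div_sub (hξ : 0 < ξ) (he : 0 ≤ e) (hlt : e < δ * ξ) :
    transformedError δ ξ e ≤ e / (δ * ξ - e) := by
  have hsub : 0 < δ * ξ - e := by linarith
  have hlog := Real.log_le_sub_one_of_pos (div_pos (by linarith : 0 < δ * ξ + e) hsub)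
  have hratio : (δ * ξ + e) / (δ * ξ - e) - 1 = 2 * (e / (δ * ξ - e)) := by field_simp; ring
  rw [transformedError_eq hξ.ne']
  linarith

theorem transformedError_le_two_mul_gain_mul (hξ : 0 < ξ) (he : 0 ≤ e) (hlt : e < δ * ξ) :
    transformedError δ ξ e ≤ 2 * (transformedErrorGain δ ξ e * e) := by
  have hadd : 0 < δ * ξ + e := by linarith
  rw [transformedErrorGain_eq hξ.ne']
  calc transformedError δ ξ e ≤ e / (δ * ξ - e) := transformedError_le_div_sub hξ he hlt
    _ ≤ e / (δ * ξ + e) + e / (δ * ξ - e) := le_add_of_nonneg_left (by positivity)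
    _ = 2 * (1 / 2 * (1 / (δ * ξ + e) + 1 / (δ * ξ - e)) * e) := by ring

theorem transformedErrorGain_le_exp_div (hξ : 0 < ξ) (he : 0 ≤ e) (hlt : e < δ * ξ) :
    transformedErrorGain δ ξ e ≤ Real.exp (2 * transformedError δ ξ e) / (δ * ξ) := by
  have hadd : 0 < δ * ξ + e := by linarith
  have hsub : 0 < δ * ξ - e := by linarith
  have hexp : Real.exp (2 * transformedError δ ξ e) = (δ * ξ + e) / (δ * ξ - e) := by
    rw [transformedError_eq hξ.ne', ← mul_assoc, mul_one_div_cancel two_ne_zero, one_mul,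
      Real.exp_log (div_pos hadd hsub)]
  rw [hexp, transformedErrorGain_eq hξ.ne']
  calc 1 / 2 * (1 / (δ * ξ + e) + 1 / (δ * ξ - e))
      ≤ 1 / 2 * (1 / (δ * ξ - e) + 1 / (δ * ξ - e)) := by gcongr; linarith
    _ = 1 / (δ * ξ - e) := by ring
    _ ≤ (δ * ξ + e) / (δ * ξ - e) / (δ * ξ) := by
      rw [div_div, div_le_div_iff₀ hsub (mul_pos hsub (by linarith))]
      nlinarith

theorem tendsto_transformedError {ξ e : ℝ → ℝ} {ξmin : ℝ} (hξmin : 0 < ξmin)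
    (hξ : ∀ t ≥ 0, ξmin ≤ ξ t) (he0 : ∀ t ≥ 0, 0 ≤ e t) (hlt : ∀ t ≥ 0, e t < δ * ξ t)
    (he : Tendsto e atTop (nhds 0)) :
    Tendsto (fun t => transformedError δ (ξ t) (e t)) atTop (nhds 0) := by
  have hξ0 (t : ℝ) (ht : 0 ≤ t) : 0 < ξ t := hξmin.trans_le (hξ t ht)
  have hδ : 0 < δ := pos_of_mul_pos_left ((he0 0 le_rfl).trans_lt (hlt 0 le_rfl))
    (hξ0 0 le_rfl).le
  have hδξ : 0 < δ * ξmin := mul_pos hδ hξmin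
  have hbound : Tendsto (fun t => e t / (δ * ξmin - e t)) atTop (nhds 0) := by
    simpa [Pi.div_def] using he.div (he.const_sub (δ * ξmin)) (by simpa using hδξ.ne')
  refine squeeze_zero' ?_ ?_ hbound
  · filter_upwards [eventually_ge_atTop 0] with t ht
    exact transformedError_nonneg (hξ0 t ht) (he0 t ht) (hlt t ht)
  · filter_upwards [eventually_ge_atTop 0, he.eventually (gt_mem_nhds hδξ)] with t ht het
    refine (transformedError_le_div_sub (hξ0 t ht) (he0 t ht) (hlt t ht)).trans ?_
    exact div_le_div_of_nonneg_left (he0 t ht) (sub_pos.mpr het)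
      (sub_le_sub_right (mul_le_mul_of_nonneg_left (hξ t ht) hδ.le) _)

end TransformedError

/-! ### The scalar error system -/

/-- The Lyapunov function `K - γ E² - 2 γ e` of the scalar error system. Being indefinite, it gives
no bound on `E` by itself. -/
def errorLyapunov (γ δ : ℝ) (ξ e K : ℝ → ℝ) (t : ℝ) : ℝ :=
  K t - γ * transformedError δ (ξ t) (e t) ^ 2 - 2 * γ * e t

/-- A performance function `ξ` with derivative `ξ'`: it is nonincreasing and bounded below by
`ξmin > 0` on `[0, ∞)`. -/
structure IsPerformanceFunction (ξmin : ℝ) (ξ ξ' : ℝ → ℝ) : Prop where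
  ξmin_pos : 0 < ξmin
  hasDerivAt_ξ : ∀ t ≥ 0, HasDerivAt ξ (ξ' t) t
  ξ'_nonpos : ∀ t ≥ 0, ξ' t ≤ 0
  ξmin_le : ∀ t ≥ 0, ξmin ≤ ξ t

theorem isPerformanceFunction_exp {ℓ ξ₀ ξmin : ℝ} (hℓ : 0 ≤ ℓ) (hξmin : 0 < ξmin)
    (hξ₀ : ξmin ≤ ξ₀) :
    IsPerformanceFunction ξmin (fun t => (ξ₀ - ξmin) * Real.exp (-ℓ * t) + ξmin)
      (fun t => (ξ₀ - ξmin) * (Real.exp (-ℓ * t) * -ℓ)) where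
  ξmin_pos := hξmin
  hasDerivAt_ξ t _ := by
    simpa using (((hasDerivAt_id t).const_mul (-ℓ)).exp.const_mul (ξ₀ - ξmin)).add_const ξmin
  ξ'_nonpos t _ := mul_nonpos_of_nonneg_of_nonpos (sub_nonneg.mpr hξ₀)
    (mul_nonpos_of_nonneg_of_nonpos (Real.exp_pos _).le (neg_nonpos.mpr hℓ))
  ξmin_le t _ := le_add_of_nonneg_left (mul_nonneg (sub_nonneg.mpr hξ₀) (Real.exp_pos _).le)

/-- The closed-loop scalar error dynamics: the error `e` stays in the shrinking envelope
`[0, δ * ξ)`, and exchanges energy with `K` through the power `p`, which is dominated by `K`.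
The bound `e ≤ 2 - σ` keeps `e` away from the second zero of `e (2 - e)`, the squared length of
the vector part of the attitude error. -/
structure IsEnvelopedErrorSystem (k γ δ σ ξmin B : ℝ) (ξ ξ' e p K : ℝ → ℝ) : Prop extends
    IsPerformanceFunction ξmin ξ ξ' where
  k_pos : 0 < k
  γ_pos : 0 < γ
  σ_pos : 0 < σ
  B_pos : 0 < B
  hasDerivAt_e : ∀ t ≥ 0, HasDerivAt e
    (1 / 2 * p t + 1 / 2 * (k * correctionGain δ (ξ t) (e t)) * (e t * (2 - e t))) t
  hasDerivAt_K : ∀ t ≥ 0, HasDerivAt K (γ * correctionGain δ (ξ t) (e t) * p t) t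
  p_sq_le : ∀ t ≥ 0, p t ^ 2 ≤ B * K t
  e_nonneg : ∀ t ≥ 0, 0 ≤ e t
  e_le : ∀ t ≥ 0, e t ≤ 2 - σ
  e_lt : ∀ t ≥ 0, e t < δ * ξ t

namespace IsEnvelopedErrorSystem

variable {k γ δ σ ξmin B : ℝ} {ξ ξ' e p K : ℝ → ℝ}
  (h : IsEnvelopedErrorSystem k γ δ σ ξmin B ξ ξ' e p K)

include h

theorem ξ_pos {t : ℝ} (ht : 0 ≤ t) : 0 < ξ t := h.ξmin_pos.trans_le (h.ξmin_le t ht)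

theorem K_nonneg {t : ℝ} (ht : 0 ≤ t) : 0 ≤ K t :=
  nonneg_of_mul_nonneg_right ((sq_nonneg _).trans (h.p_sq_le t ht)) h.B_pos

theorem exists_hasDerivAt_errorLyapunov_le {t : ℝ} (ht : 0 ≤ t) :
    ∃ U', HasDerivAt (errorLyapunov γ δ ξ e K) U' t ∧ U' ≤ -(γ * k * σ * e t) := by
  have hξ := h.ξ_pos ht
  have he := h.e_nonneg t ht
  have hE := transformedError_nonneg hξ he (h.e_lt t ht)
  have hΔ := transformedErrorGain_pos hξ he (h.e_lt t ht)
  have hφ := one_le_correctionGain hξ he (h.e_lt t ht)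
  have hE' := hasDerivAt_transformedError (h.hasDerivAt_e t ht) (h.hasDerivAt_ξ t ht) hξ he
    (h.e_lt t ht)
  refine ⟨_, ((h.hasDerivAt_K t ht).fun_sub ((hE'.fun_pow 2).const_mul γ)).fun_sub
    ((h.hasDerivAt_e t ht).const_mul (2 * γ)), ?_⟩
  set E := transformedError δ (ξ t) (e t)
  set Δ := transformedErrorGain δ (ξ t) (e t)
  set φ := correctionGain δ (ξ t) (e t) with hφ_def
  have hdrift : 2 * γ * E * Δ * (e t * ξ' t / ξ t) ≤ 0 :=
    mul_nonpos_of_nonneg_of_nonpos (by have := h.γ_pos; positivity)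
      (div_nonpos_of_nonpos_of_nonneg
        (mul_nonpos_of_nonneg_of_nonpos he (h.ξ'_nonpos t ht)) hξ.le)
  have hdamping : γ * k * (σ * e t) ≤ γ * k * (φ ^ 2 * (e t * (2 - e t))) := by
    have : σ * e t ≤ e t * (2 - e t) := by nlinarith [h.e_le t ht]
    refine mul_le_mul_of_nonneg_left ?_ (mul_pos h.γ_pos h.k_pos).le
    exact this.trans (le_mul_of_one_le_left (this.trans' (mul_nonneg h.σ_pos.le he))
      (one_le_pow₀ hφ))
  calc _ = 2 * γ * E * Δ * (e t * ξ' t / ξ t) - γ * k * (φ ^ 2 * (e t * (2 - e t))) := by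
        rw [hφ_def, correctionGain]; ring
    _ ≤ -(γ * k * σ * e t) := by linarith

theorem K_le {t : ℝ} (ht : 0 ≤ t) :
    K t ≤ errorLyapunov γ δ ξ e K 0 + γ * transformedError δ (ξ t) (e t) ^ 2 + 4 * γ := by
  choose! U' hU hU' using fun t ht => h.exists_hasDerivAt_errorLyapunov_le (t := t) ht
  have hanti := antitoneOn_Ici_of_hasDerivAt_nonpos hU (fun t ht => (hU' t ht).trans <|
      neg_nonpos.mpr (mul_nonneg (mul_pos (mul_pos h.γ_pos h.k_pos) h.σ_pos).le (h.e_nonneg t ht)))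
    (Set.self_mem_Ici) ht ht
  rw [errorLyapunov] at hanti
  nlinarith [h.γ_pos, h.e_le t ht, h.σ_pos]

theorem exists_one_le_deriv_e :
    ∃ M, ∀ t ≥ 0, M ≤ transformedError δ (ξ t) (e t) →
      1 ≤ 1 / 2 * p t + 1 / 2 * (k * correctionGain δ (ξ t) (e t)) * (e t * (2 - e t)) := by
  set D := |errorLyapunov γ δ ξ e K 0| + 4 * γ
  set A := √(B * (D + γ))
  have hkσ := mul_pos h.k_pos h.σ_pos
  refine ⟨max 1 ((2 * A + 4) / (k * σ)), fun t ht hM => ?_⟩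
  have hξ := h.ξ_pos ht
  have he := h.e_nonneg t ht
  have hEgain := transformedError_le_two_mul_gain_mul hξ he (h.e_lt t ht)
  have hΔ := transformedErrorGain_pos hξ he (h.e_lt t ht)
  have hK := h.K_le ht
  set E := transformedError δ (ξ t) (e t)
  set Δ := transformedErrorGain δ (ξ t) (e t)
  have hE1 : 1 ≤ E := (le_max_left _ _).trans hM
  have hEA : 2 * A + 4 ≤ k * σ * E := by
    rw [← div_le_iff₀' hkσ]
    exact (le_max_right _ _).trans hM
  have hD : 0 ≤ D := add_nonneg (abs_nonneg _) (by linarith [h.γ_pos])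
  have hp : |p t| ≤ A * E := by
    refine abs_le_of_sq_le_sq ?_ (by positivity)
    have hKE : K t ≤ (D + γ) * E ^ 2 := by
      nlinarith [le_abs_self (errorLyapunov γ δ ξ e K 0), one_le_pow₀ hE1 (n := 2)]
    calc p t ^ 2 ≤ B * K t := h.p_sq_le t ht
      _ ≤ B * ((D + γ) * E ^ 2) := mul_le_mul_of_nonneg_left hKE h.B_pos.le
      _ = (A * E) ^ 2 := by
        rw [mul_pow, Real.sq_sqrt (mul_nonneg h.B_pos.le (add_nonneg hD h.γ_pos.le)), mul_assoc]
  have hpush : k * σ * E ^ 2 / 2 ≤ k * correctionGain δ (ξ t) (e t) * (e t * (2 - e t)) :=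
    calc k * σ * E ^ 2 / 2 = k * σ * (E * E / 2) := by ring
      _ ≤ k * σ * (E * (Δ * e t)) :=
        mul_le_mul_of_nonneg_left (by nlinarith) hkσ.le
      _ ≤ k * σ * ((E * Δ + 1) * e t) := mul_le_mul_of_nonneg_left (by nlinarith) hkσ.le
      _ = k * correctionGain δ (ξ t) (e t) * (e t * σ) := by rw [correctionGain]; ring
      _ ≤ k * correctionGain δ (ξ t) (e t) * (e t * (2 - e t)) := by
        have hφ := one_le_correctionGain hξ he (h.e_lt t ht)
        refine mul_le_mul_of_nonneg_left ?_ (mul_nonneg h.k_pos.le (zero_le_one.trans hφ))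
        exact mul_le_mul_of_nonneg_left (by linarith [h.e_le t ht]) he
  nlinarith [neg_le_of_abs_le hp]

theorem exists_transformedError_le : ∃ M, ∀ t ≥ 0, transformedError δ (ξ t) (e t) ≤ M := by
  obtain ⟨M, hM⟩ := h.exists_one_le_deriv_e
  refine ⟨M, le_of_bddAbove_of_le_hasDerivAt one_pos h.hasDerivAt_e
    (fun t ht => hasDerivAt_transformedError (h.hasDerivAt_e t ht) (h.hasDerivAt_ξ t ht)
      (h.ξ_pos ht) (h.e_nonneg t ht) (h.e_lt t ht))
    h.e_le hM fun t ht hMt => ?_⟩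
  have hdrift : e t * ξ' t / ξ t ≤ 0 := div_nonpos_of_nonpos_of_nonneg
    (mul_nonpos_of_nonneg_of_nonpos (h.e_nonneg t ht) (h.ξ'_nonpos t ht)) (h.ξ_pos ht).le
  exact mul_pos (transformedErrorGain_pos (h.ξ_pos ht) (h.e_nonneg t ht) (h.e_lt t ht))
    (by linarith [hM t ht hMt.ge])

theorem δ_pos : 0 < δ :=
  pos_of_mul_pos_left ((h.e_nonneg 0 le_rfl).trans_lt (h.e_lt 0 le_rfl)) (h.ξ_pos le_rfl).le

theorem exists_correctionGain_le : ∃ Φ, ∀ t ≥ 0, correctionGain δ (ξ t) (e t) ≤ Φ := by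
  obtain ⟨M, hM⟩ := h.exists_transformedError_le
  have hM0 : 0 ≤ M := (transformedError_nonneg (h.ξ_pos le_rfl) (h.e_nonneg 0 le_rfl)
    (h.e_lt 0 le_rfl)).trans (hM 0 le_rfl)
  have hδξ : 0 < δ * ξmin := mul_pos h.δ_pos h.ξmin_pos
  refine ⟨M * (Real.exp (2 * M) / (δ * ξmin)) + 1, fun t ht => ?_⟩
  have hξ := h.ξ_pos ht
  have he := h.e_nonneg t ht
  have hΔ : transformedErrorGain δ (ξ t) (e t) ≤ Real.exp (2 * M) / (δ * ξmin) := by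
    refine (transformedErrorGain_le_exp_div hξ he (h.e_lt t ht)).trans ?_
    gcongr
    · exact hM t ht
    · exact h.δ_pos.le
    · exact h.ξmin_le t ht
  exact add_le_add_left (mul_le_mul (hM t ht) hΔ
    (transformedErrorGain_pos hξ he (h.e_lt t ht)).le hM0) 1

theorem exists_K_le : ∃ κ, ∀ t ≥ 0, K t ≤ κ := by
  obtain ⟨M, hM⟩ := h.exists_transformedError_le
  refine ⟨errorLyapunov γ δ ξ e K 0 + γ * M ^ 2 + 4 * γ, fun t ht => (h.K_le ht).trans ?_⟩
  have := h.γ_pos.le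
  have := transformedError_nonneg (h.ξ_pos ht) (h.e_nonneg t ht) (h.e_lt t ht)
  gcongr
  exact hM t ht

theorem exists_norm_deriv_e_le :
    ∃ L, ∀ t ≥ 0,
      ‖1 / 2 * p t + 1 / 2 * (k * correctionGain δ (ξ t) (e t)) * (e t * (2 - e t))‖ ≤ L := by
  obtain ⟨Φ, hΦ⟩ := h.exists_correctionGain_le
  obtain ⟨κ, hκ⟩ := h.exists_K_le
  refine ⟨1 / 2 * √(B * κ) + 1 / 2 * (k * Φ) * 1, fun t ht => (norm_add_le _ _).trans ?_⟩
  have hk := h.k_pos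
  have he := h.e_nonneg t ht
  have he2 : 0 ≤ 2 - e t := by linarith [h.e_le t ht, h.σ_pos]
  have hφ := zero_le_one.trans (one_le_correctionGain (h.ξ_pos ht) he (h.e_lt t ht))
  have hp : |p t| ≤ √(B * κ) := Real.abs_le_sqrt
    ((h.p_sq_le t ht).trans (mul_le_mul_of_nonneg_left (hκ t ht) h.B_pos.le))
  refine add_le_add ?_ ?_
  · rw [norm_mul, Real.norm_of_nonneg one_half_pos.le]
    exact mul_le_mul_of_nonneg_left hp one_half_pos.le
  · rw [Real.norm_of_nonneg (by positivity)]
    have hΦt := hΦ t ht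
    have hparab : e t * (2 - e t) ≤ 1 := by nlinarith [sq_nonneg (e t - 1)]
    gcongr
    exact mul_nonneg one_half_pos.le (mul_nonneg hk.le (hφ.trans hΦt))

theorem tendsto_e : Tendsto e atTop (nhds 0) := by
  obtain ⟨M, hM⟩ := h.exists_transformedError_le
  obtain ⟨L, hL⟩ := h.exists_norm_deriv_e_le
  choose! U' hU hU' using fun t ht => h.exists_hasDerivAt_errorLyapunov_le (t := t) ht
  have hc : 0 < γ * k * σ := mul_pos (mul_pos h.γ_pos h.k_pos) h.σ_pos
  have hUge (t : ℝ) (ht : 0 ≤ t) : -(γ * M ^ 2 + 4 * γ) ≤ errorLyapunov γ δ ξ e K t := by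
    have hE := transformedError_nonneg (h.ξ_pos ht) (h.e_nonneg t ht) (h.e_lt t ht)
    rw [errorLyapunov]
    nlinarith [h.K_nonneg ht, h.γ_pos, h.e_le t ht, h.σ_pos, pow_le_pow_left₀ hE (hM t ht) 2]
  have hce := tendsto_zero_of_hasDerivAt_le_neg hU hU' hUge
    (fun t ht => mul_nonneg hc.le (h.e_nonneg t ht))
    ((uniformContinuous_const_smul (γ * k * σ)).comp_uniformContinuousOn
      (uniformContinuousOn_Ici_of_norm_hasDerivAt_le h.hasDerivAt_e hL))
  simpa only [inv_mul_cancel_left₀ hc.ne', mul_zero] using hce.const_mul (γ * k * σ)⁻¹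

theorem tendsto_transformedError :
    Tendsto (fun t => transformedError δ (ξ t) (e t)) atTop (nhds 0) :=
  _root_.tendsto_transformedError h.ξmin_pos h.ξmin_le h.e_nonneg h.e_lt h.tendsto_e

end IsEnvelopedErrorSystem

/-! ### Rigid-body error dynamics -/

theorem sq_dotProduct_le {ι : Type*} [Fintype ι] (x y : ι → ℝ) :
    (x ⬝ᵥ y) ^ 2 ≤ (x ⬝ᵥ x) * (y ⬝ᵥ y) := by
  simpa only [dotProduct, sq] using Finset.sum_mul_sq_le_sq_mul_sq Finset.univ x y

theorem vnorm_eq_norm_toLp (x : V3) : vnorm x = ‖WithLp.toLp 2 x‖ := by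
  rw [vnorm, EuclideanSpace.norm_eq, dotProduct]
  simp [sq]

theorem norm_le_vnorm (x : V3) : ‖x‖ ≤ vnorm x :=
  (pi_norm_le_iff_of_nonneg (Real.sqrt_nonneg _)).mpr fun i =>
    (PiLp.norm_apply_le (WithLp.toLp 2 x) i).trans_eq (vnorm_eq_norm_toLp x).symm

theorem vnorm_sub_le (x y : V3) : vnorm (x - y) ≤ vnorm x + vnorm y := by
  simpa only [vnorm_eq_norm_toLp, WithLp.toLp_sub] using norm_sub_le _ _

theorem vnorm_rotQ_transpose_mulVec {p : Quat4} (hp : isUnitQuat p) (x : V3) :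
    vnorm ((rotQ p)ᵀ *ᵥ x) = vnorm x := by
  rw [vnorm, dotProduct_transpose_mulVec, mulVec_mulVec, rotQ_mul_transpose hp, one_mulVec,
    ← vnorm]

theorem exists_mul_dotProduct_self_le_of_posDef {ι : Type*} [Fintype ι]
    {A : Matrix ι ι ℝ} (hA : A.PosDef) :
    ∃ m > 0, ∀ x : ι → ℝ, m * (x ⬝ᵥ x) ≤ x ⬝ᵥ A *ᵥ x := by
  obtain ⟨m, hm, hmin⟩ := (isCompact_sphere (0 : EuclideanSpace ℝ ι) 1).exists_forall_le'
    (f := fun x => x.ofLp ⬝ᵥ A *ᵥ x.ofLp) (a := 0) (by fun_prop) fun x hx => by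
      simpa using hA.dotProduct_mulVec_pos (x := x.ofLp) (by rintro h; simp_all)
  refine ⟨m, hm, fun x => ?_⟩
  rcases eq_or_ne x 0 with rfl | hx
  · simp
  have hx' : 0 < ‖WithLp.toLp 2 x‖ := norm_pos_iff.mpr (by simpa using hx)
  have hsphere := hmin (‖WithLp.toLp 2 x‖⁻¹ • WithLp.toLp 2 x) (by simp [norm_smul, hx'.ne'])
  have hself : x ⬝ᵥ x = ‖WithLp.toLp 2 x‖ ^ 2 := by
    rw [EuclideanSpace.norm_sq_eq, dotProduct]
    simp [sq]
  rw [hself, ← le_div_iff₀ (pow_pos hx' 2)]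
  refine hsphere.trans_eq ?_
  simp [mulVec_smul]
  field_simp

/-- The torque `(J a) × a - (J b) × b + J (w × b)`, with `b = a - w`, that drives the error `w`
between the true angular velocity `a` and the estimate `b`, all expressed in the body frame. -/
def gyroscopicTorque (J : Matrix (Fin 3) (Fin 3) ℝ) (a w : V3) : V3 :=
  crossProduct (J *ᵥ a) a - crossProduct (J *ᵥ (a - w)) (a - w) + J *ᵥ crossProduct w (a - w)

theorem dotProduct_gyroscopicTorque {J : Matrix (Fin 3) (Fin 3) ℝ} (hJ : J.IsSymm) (a w : V3) :
    w ⬝ᵥ gyroscopicTorque J a w = 0 := by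
  have hsymm : w ⬝ᵥ J *ᵥ crossProduct w (a - w) = crossProduct w (a - w) ⬝ᵥ J *ᵥ w := by
    rw [← dotProduct_transpose_mulVec, hJ.eq]
  rw [gyroscopicTorque, dotProduct_add, hsymm, mulVec_sub]
  generalize J *ᵥ w = b
  generalize J *ᵥ a = c
  simp only [cross_apply, dotProduct, Fin.sum_univ_three, Pi.sub_apply, cons_val]
  ring

theorem continuous_gyroscopicTorque (J : Matrix (Fin 3) (Fin 3) ℝ) :
    Continuous fun z : V3 × V3 => gyroscopicTorque J z.1 z.2 := by
  unfold gyroscopicTorque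
  have hcross {f g : V3 × V3 → V3} (hf : Continuous f) (hg : Continuous g) :
      Continuous fun z => crossProduct (f z) (g z) :=
    (crossProduct (R := ℝ)).toContinuousBilinearMap.continuous₂.comp (hf.prodMk hg)
  refine ((hcross ?_ ?_).sub (hcross ?_ ?_)).add (continuous_const.matrix_mulVec (hcross ?_ ?_))
  all_goals fun_prop

theorem exists_norm_le_of_mulVec_eq_gyroscopicTorque_add {J : Matrix (Fin 3) (Fin 3) ℝ}
    (hJ : IsUnit J.det) (C : ℝ) :
    ∃ L, ∀ a w w' u : V3, ‖a‖ ≤ C → ‖w‖ ≤ C → ‖u‖ ≤ C →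
      J *ᵥ w' = gyroscopicTorque J a w + u → ‖w'‖ ≤ L := by
  have hgyro := continuous_gyroscopicTorque J
  have hcont : Continuous fun z : V3 × V3 × V3 =>
      J⁻¹ *ᵥ (gyroscopicTorque J z.1 z.2.1 + z.2.2) := by fun_prop
  obtain ⟨L, hL⟩ := (isCompact_closedBall (0 : V3 × V3 × V3) C).exists_bound_of_continuousOn
    hcont.continuousOn
  refine ⟨L, fun a w w' u ha hw hu h => ?_⟩
  have hbound := hL (a, w, u) (by simp [ha, hw, hu])
  rwa [← h, mulVec_mulVec, nonsing_inv_mul _ hJ, one_mulVec] at hbound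

theorem mulVec_rotQ_transpose_mulVec_of_conj_dynamics {p : Quat4} (hp : isUnitQuat p)
    {J : Matrix (Fin 3) (Fin 3) ℝ} {x x' W T u : V3}
    (h : (rotQ p * J * (rotQ p)ᵀ) *ᵥ x' = crossProduct ((rotQ p * J * (rotQ p)ᵀ) *ᵥ x) x
      + rotQ p *ᵥ T + (rotQ p * J * (rotQ p)ᵀ) *ᵥ crossProduct x W + u) :
    J *ᵥ ((rotQ p)ᵀ *ᵥ x') = crossProduct (J *ᵥ ((rotQ p)ᵀ *ᵥ x)) ((rotQ p)ᵀ *ᵥ x) + T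
      + J *ᵥ crossProduct ((rotQ p)ᵀ *ᵥ x) ((rotQ p)ᵀ *ᵥ W) + (rotQ p)ᵀ *ᵥ u := by
  have hconj : (rotQ p)ᵀ * (rotQ p * J * (rotQ p)ᵀ) = J * (rotQ p)ᵀ := by
    rw [← Matrix.mul_assoc, ← Matrix.mul_assoc, rotQ_transpose_mul hp, Matrix.one_mul]
  have hrot := congrArg ((rotQ p)ᵀ *ᵥ ·) h
  simp only [mulVec_add, rotQ_transpose_mulVec_cross hp, mulVec_mulVec, hconj,
    rotQ_transpose_mul hp, one_mulVec] at hrot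
  simpa only [← rotQ_transpose_mulVec_cross hp, mulVec_mulVec] using hrot

theorem tendsto_crossProduct_zero {ι : Type*} {l : Filter ι} {x y : ι → V3}
    (hx : Tendsto x l (nhds 0)) (hy : IsBoundedUnder (· ≤ ·) l (norm ∘ y)) :
    Tendsto (fun i => crossProduct (x i) (y i)) l (nhds 0) :=
  hx.op_zero_isBoundedUnder_le' hy (fun x y => crossProduct x y)
    ⟨_, (crossProduct (R := ℝ)).toContinuousBilinearMap.le_opNorm₂⟩

theorem tendsto_zero_of_hasDerivAt_qmul {P : ℝ → Quat4} {w w' r : ℝ → V3} {a C L : ℝ}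
    (hP : ∀ t ≥ a, HasDerivAt P ((1 / 2 : ℝ) • qmul (P t) (qpure (w t + r t))) t)
    (hP₁ : Tendsto (fun t => (P t).1) atTop (nhds 1))
    (hP₂ : Tendsto (fun t => (P t).2) atTop (nhds 0))
    (hr : Tendsto r atTop (nhds 0)) (hw : ∀ t ≥ a, HasDerivAt w (w' t) t)
    (hC : ∀ t ≥ a, ‖w t‖ ≤ C) (hL : ∀ t ≥ a, ‖w' t‖ ≤ L) :
    Tendsto w atTop (nhds 0) := by
  have hwC : IsBoundedUnder (· ≤ ·) atTop (norm ∘ w) :=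
    isBoundedUnder_of_eventually_le ((eventually_ge_atTop a).mono hC)
  have hpert : Tendsto (fun t => ((P t).1 - 1) • w t + (P t).1 • r t
      + (crossProduct (P t).2 (w t) + crossProduct (P t).2 (r t))) atTop (nhds 0) := by
    have hP₁' : Tendsto (fun t => (P t).1 - 1) atTop (nhds 0) := by simpa using hP₁.sub_const 1
    simpa using ((hP₁'.zero_smul_isBoundedUnder_le hwC).add (hP₁.smul hr)).add
      ((tendsto_crossProduct_zero hP₂ hwC).add
        (tendsto_crossProduct_zero hP₂ hr.norm.isBoundedUnder_le))
  refine tendsto_zero_of_hasDerivAt_add (a := a) (fun t ht => ?_) (hP₂.const_smul (2 : ℝ))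
    (uniformContinuousOn_Ici_of_norm_hasDerivAt_le hw hL) hpert
  refine (((ContinuousLinearMap.snd ℝ ℝ V3).hasFDerivAt.comp_hasDerivAt t
    (hP t ht)).const_smul (2 : ℝ)).congr_deriv ?_
  simp only [qmul, qpure, ContinuousLinearMap.coe_snd', Prod.smul_snd, map_add]
  module

/-! ### The attitude observer -/

/-- The attitude error `Q̃_o = Q̂⁻¹ ⊙ Q`. -/
def attitudeError (Q Qh : ℝ → Quat4) (t : ℝ) : Quat4 := qmul (qinv (Qh t)) (Q t)

/-- The angular-velocity error `Ω̃_o = Ω - R_{Q̃_o}ᵀ Ω̂`, expressed in the body frame. -/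
def angularVelocityError (Q Qh : ℝ → Quat4) (Ω Ωh : ℝ → V3) (t : ℝ) : V3 :=
  Ω t - (rotQ (attitudeError Q Qh t))ᵀ *ᵥ Ωh t

/-- The feedback `-c R_P q` of the vector part `q` of an attitude error `P`, the common form of the
two correction terms `W_Ω` and `W_τ`. -/
def attitudeFeedback (c : ℝ) (P : Quat4) : V3 := -(c • (rotQ P *ᵥ P.2))

theorem rotQ_transpose_mulVec_attitudeFeedback {P : Quat4} (hP : isUnitQuat P) (c : ℝ) :
    (rotQ P)ᵀ *ᵥ attitudeFeedback c P = -(c • P.2) := by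
  rw [attitudeFeedback, mulVec_neg, mulVec_smul, mulVec_mulVec, rotQ_transpose_mul hP, one_mulVec]

/-- A rigid body with inertia matrix `J`, attitude `Q`, angular velocity `Ω` and torque `τ`,
together with the attitude observer with state `(Qh, Ωh)` and correction terms
`attitudeFeedback (k * φ t)` and `attitudeFeedback (γ * φ t)`. -/
structure IsAttitudeObserver (J : Matrix (Fin 3) (Fin 3) ℝ) (k γ : ℝ) (φ : ℝ → ℝ)
    (Q Qh : ℝ → Quat4) (Ω Ω' Ωh Ωh' τ : ℝ → V3) : Prop where
  isUnitQuat_Q : ∀ t ≥ 0, isUnitQuat (Q t)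
  isUnitQuat_Qh : ∀ t ≥ 0, isUnitQuat (Qh t)
  hasDerivAt_Q : ∀ t ≥ 0, HasDerivAt Q ((1 / 2 : ℝ) • qmul (Q t) (qpure (Ω t))) t
  hasDerivAt_Qh : ∀ t ≥ 0, HasDerivAt Qh ((1 / 2 : ℝ) •
    qmul (Qh t) (qpure (Ωh t + attitudeFeedback (k * φ t) (attitudeError Q Qh t)))) t
  hasDerivAt_Ω : ∀ t ≥ 0, HasDerivAt Ω (Ω' t) t
  dynamics : ∀ t ≥ 0, J *ᵥ Ω' t = crossProduct (J *ᵥ Ω t) (Ω t) + τ t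
  hasDerivAt_Ωh : ∀ t ≥ 0, HasDerivAt Ωh (Ωh' t) t
  observer_dynamics : ∀ t ≥ 0, let P := attitudeError Q Qh t
    let Jh := rotQ P * J * (rotQ P)ᵀ
    Jh *ᵥ Ωh' t = crossProduct (Jh *ᵥ Ωh t) (Ωh t) + rotQ P *ᵥ τ t
      + Jh *ᵥ crossProduct (Ωh t) (attitudeFeedback (k * φ t) P) + attitudeFeedback (γ * φ t) P

namespace IsAttitudeObserver

variable {J : Matrix (Fin 3) (Fin 3) ℝ} {k γ : ℝ} {φ : ℝ → ℝ} {Q Qh : ℝ → Quat4}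
  {Ω Ω' Ωh Ωh' τ : ℝ → V3} {t : ℝ} (h : IsAttitudeObserver J k γ φ Q Qh Ω Ω' Ωh Ωh' τ)

include h

theorem isUnitQuat_attitudeError (ht : 0 ≤ t) : isUnitQuat (attitudeError Q Qh t) :=
  isUnitQuat_qmul_qinv (h.isUnitQuat_Qh t ht) (h.isUnitQuat_Q t ht)

theorem snd_dotProduct_snd_attitudeError (ht : 0 ≤ t) :
    (attitudeError Q Qh t).2 ⬝ᵥ (attitudeError Q Qh t).2
      = (1 - (attitudeError Q Qh t).1) * (2 - (1 - (attitudeError Q Qh t).1)) := by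
  have hunit := h.isUnitQuat_attitudeError ht
  rw [isUnitQuat] at hunit
  linear_combination hunit

theorem snd_dotProduct_snd_attitudeError_le_one (ht : 0 ≤ t) :
    (attitudeError Q Qh t).2 ⬝ᵥ (attitudeError Q Qh t).2 ≤ 1 :=
  (le_add_of_nonneg_left (sq_nonneg _)).trans_eq (h.isUnitQuat_attitudeError ht)

theorem norm_snd_attitudeError_le_one (ht : 0 ≤ t) : ‖(attitudeError Q Qh t).2‖ ≤ 1 :=
  (norm_le_vnorm _).trans (Real.sqrt_le_one.mpr (h.snd_dotProduct_snd_attitudeError_le_one ht))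

theorem fst_attitudeError_le_one (ht : 0 ≤ t) : (attitudeError Q Qh t).1 ≤ 1 := by
  have hnonneg : 0 ≤ (attitudeError Q Qh t).2 ⬝ᵥ (attitudeError Q Qh t).2 :=
    Finset.sum_nonneg fun _ _ => mul_self_nonneg _
  rw [h.snd_dotProduct_snd_attitudeError ht] at hnonneg
  nlinarith

theorem hasDerivAt_attitudeError (ht : 0 ≤ t) :
    HasDerivAt (attitudeError Q Qh) ((1 / 2 : ℝ) • qmul (attitudeError Q Qh t)
      (qpure (angularVelocityError Q Qh Ω Ωh t + (k * φ t) • (attitudeError Q Qh t).2))) t := by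
  refine (hasDerivAt_qmul_qinv (h.isUnitQuat_Qh t ht) (h.isUnitQuat_Q t ht)
    (h.hasDerivAt_Qh t ht) (h.hasDerivAt_Q t ht)).congr_deriv ?_
  rw [← attitudeError, mulVec_add,
    rotQ_transpose_mulVec_attitudeFeedback (h.isUnitQuat_attitudeError ht), ← sub_sub,
    sub_neg_eq_add, ← angularVelocityError]

theorem exists_hasDerivAt_angularVelocityError (ht : 0 ≤ t) :
    ∃ w', HasDerivAt (angularVelocityError Q Qh Ω Ωh) w' t ∧
      J *ᵥ w' = gyroscopicTorque J (Ω t) (angularVelocityError Q Qh Ω Ωh t)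
        + (γ * φ t) • (attitudeError Q Qh t).2 := by
  refine ⟨_, (h.hasDerivAt_Ω t ht).fun_sub
    (hasDerivAt_rotQ_transpose_mulVec (h.hasDerivAt_attitudeError ht) (h.hasDerivAt_Ωh t ht)), ?_⟩
  have hP := h.isUnitQuat_attitudeError ht
  have hΩh := mulVec_rotQ_transpose_mulVec_of_conj_dynamics hP (h.observer_dynamics t ht)
  have hrot : (rotQ (attitudeError Q Qh t))ᵀ *ᵥ Ωh t
      = Ω t - angularVelocityError Q Qh Ω Ωh t := (sub_sub_cancel _ _).symm
  rw [rotQ_transpose_mulVec_attitudeFeedback hP, rotQ_transpose_mulVec_attitudeFeedback hP,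
    hrot] at hΩh
  rw [mulVec_sub, mulVec_sub, h.dynamics t ht, hΩh, hrot, map_neg, map_add, LinearMap.add_apply,
    mulVec_add, mulVec_neg, ← cross_anticomm ((k * φ t) • _), mulVec_neg, gyroscopicTorque]
  abel

theorem hasDerivAt_one_sub_fst_attitudeError (ht : 0 ≤ t) :
    HasDerivAt (fun u => 1 - (attitudeError Q Qh u).1)
      (1 / 2 * ((attitudeError Q Qh t).2 ⬝ᵥ angularVelocityError Q Qh Ω Ωh t)
        + 1 / 2 * (k * φ t)
          * ((1 - (attitudeError Q Qh t).1) * (2 - (1 - (attitudeError Q Qh t).1)))) t := by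
  refine (((ContinuousLinearMap.fst ℝ ℝ V3).hasFDerivAt.comp_hasDerivAt t
    (h.hasDerivAt_attitudeError ht)).const_sub 1).congr_deriv ?_
  rw [← h.snd_dotProduct_snd_attitudeError ht]
  simp only [qmul, qpure, ContinuousLinearMap.coe_fst', Prod.smul_fst, dotProduct_add,
    dotProduct_smul, smul_eq_mul]
  ring

theorem hasDerivAt_kineticEnergy (hJ : J.IsSymm) (ht : 0 ≤ t) :
    HasDerivAt (fun u => 1 / 2 * (angularVelocityError Q Qh Ω Ωh u ⬝ᵥ
        J *ᵥ angularVelocityError Q Qh Ω Ωh u))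
      (γ * φ t * ((attitudeError Q Qh t).2 ⬝ᵥ angularVelocityError Q Qh Ω Ωh t)) t := by
  obtain ⟨w', hw, hJw⟩ := h.exists_hasDerivAt_angularVelocityError ht
  have hJder : HasDerivAt (fun u => J *ᵥ angularVelocityError Q Qh Ω Ωh u) (J *ᵥ w') t :=
    (mulVecLin J).toContinuousLinearMap.hasFDerivAt.comp_hasDerivAt t hw
  refine ((hasDerivAt_dotProduct hw hJder).const_mul (1 / 2)).congr_deriv ?_
  rw [← dotProduct_transpose_mulVec, hJ.eq, hJw, dotProduct_add, dotProduct_gyroscopicTorque hJ,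
    dotProduct_smul, dotProduct_comm, smul_eq_mul]
  ring

theorem tendsto_snd_attitudeError
    (he : Tendsto (fun t => 1 - (attitudeError Q Qh t).1) atTop (nhds 0)) :
    Tendsto (fun t => (attitudeError Q Qh t).2) atTop (nhds 0) := by
  have hsqrt : Tendsto (fun t => √((1 - (attitudeError Q Qh t).1)
      * (2 - (1 - (attitudeError Q Qh t).1)))) atTop (nhds 0) := by
    simpa using (he.mul (he.const_sub 2)).sqrt
  refine squeeze_zero_norm' ?_ hsqrt
  filter_upwards [eventually_ge_atTop 0] with t ht
  rw [← h.snd_dotProduct_snd_attitudeError ht]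
  exact norm_le_vnorm _

theorem exists_vnorm_Ωh_le (hΩ : ∃ C, ∀ t ≥ 0, vnorm (Ω t) ≤ C)
    (hw : ∃ C, ∀ t ≥ 0, vnorm (angularVelocityError Q Qh Ω Ωh t) ≤ C) :
    ∃ C, ∀ t ≥ 0, vnorm (Ωh t) ≤ C := by
  obtain ⟨CΩ, hΩ⟩ := hΩ
  obtain ⟨Cw, hw⟩ := hw
  refine ⟨CΩ + Cw, fun t ht => ?_⟩
  calc vnorm (Ωh t) = vnorm ((rotQ (attitudeError Q Qh t))ᵀ *ᵥ Ωh t) :=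
        (vnorm_rotQ_transpose_mulVec (h.isUnitQuat_attitudeError ht) _).symm
    _ = vnorm (Ω t - angularVelocityError Q Qh Ω Ωh t) :=
        congrArg vnorm (sub_sub_cancel _ _).symm
    _ ≤ CΩ + Cw := (vnorm_sub_le _ _).trans (add_le_add (hΩ t ht) (hw t ht))

theorem tendsto_angularVelocityError (hJ : IsUnit J.det)
    (hΩ : ∃ C, ∀ t ≥ 0, vnorm (Ω t) ≤ C)
    (hw : ∃ C, ∀ t ≥ 0, vnorm (angularVelocityError Q Qh Ω Ωh t) ≤ C)
    (hφ : ∃ C, ∀ t ≥ 0, ‖φ t‖ ≤ C)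
    (he : Tendsto (fun t => 1 - (attitudeError Q Qh t).1) atTop (nhds 0)) :
    Tendsto (angularVelocityError Q Qh Ω Ωh) atTop (nhds 0) := by
  obtain ⟨CΩ, hΩ⟩ := hΩ
  obtain ⟨Cw, hw⟩ := hw
  obtain ⟨Cφ, hφ⟩ := hφ
  have hw' (t : ℝ) (ht : 0 ≤ t) := (norm_le_vnorm _).trans (hw t ht)
  have hP₂ := h.tendsto_snd_attitudeError he
  obtain ⟨L, hL⟩ := exists_norm_le_of_mulVec_eq_gyroscopicTorque_add hJ
    (max (max CΩ Cw) (‖γ‖ * Cφ))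
  choose! w' hwder hJw using fun t ht => h.exists_hasDerivAt_angularVelocityError (t := t) ht
  refine tendsto_zero_of_hasDerivAt_qmul (fun t ht => h.hasDerivAt_attitudeError ht)
    (by simpa using he.const_sub 1) hP₂ ?_ hwder hw' fun t ht => hL _ _ _ _ ?_ ?_ ?_ (hJw t ht)
  · have hkφ : IsBoundedUnder (· ≤ ·) atTop (norm ∘ fun t => k * φ t) := by
      refine isBoundedUnder_of_eventually_le (a := ‖k‖ * Cφ) ?_
      filter_upwards [eventually_ge_atTop 0] with t ht
      exact (norm_mul k _).trans_le (mul_le_mul_of_nonneg_left (hφ t ht) (norm_nonneg k))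
    exact hkφ.smul_tendsto_zero hP₂
  · exact ((norm_le_vnorm _).trans (hΩ t ht)).trans ((le_max_left _ _).trans (le_max_left _ _))
  · exact (hw' t ht).trans ((le_max_right _ _).trans (le_max_left _ _))
  · calc ‖(γ * φ t) • (attitudeError Q Qh t).2‖
        ≤ ‖γ * φ t‖ := by
          rw [norm_smul]
          exact mul_le_of_le_one_right (norm_nonneg _) (h.norm_snd_attitudeError_le_one ht)
      _ ≤ ‖γ‖ * Cφ := (norm_mul γ _).trans_le (mul_le_mul_of_nonneg_left (hφ t ht) (norm_nonneg γ))
      _ ≤ _ := le_max_right _ _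

theorem isEnvelopedErrorSystem {δ ξmin m s : ℝ} {ξ ξ' : ℝ → ℝ}
    (hφ : ∀ t ≥ 0, φ t = correctionGain δ (ξ t) (1 - (attitudeError Q Qh t).1))
    (hJ : J.IsSymm) (hm : 0 < m) (hmJ : ∀ x, m * (x ⬝ᵥ x) ≤ x ⬝ᵥ J *ᵥ x) (hk : 0 < k) (hγ : 0 < γ)
    (hs : -1 < s) (hξ : IsPerformanceFunction ξmin ξ ξ')
    (hsign : ∀ t ≥ 0, s ≤ (attitudeError Q Qh t).1)
    (hlt : ∀ t ≥ 0, 1 - (attitudeError Q Qh t).1 < δ * ξ t) :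
    IsEnvelopedErrorSystem k γ δ (1 + s) ξmin (2 / m) ξ ξ'
      (fun t => 1 - (attitudeError Q Qh t).1)
      (fun t => (attitudeError Q Qh t).2 ⬝ᵥ angularVelocityError Q Qh Ω Ωh t)
      (fun t => 1 / 2 * (angularVelocityError Q Qh Ω Ωh t ⬝ᵥ
        J *ᵥ angularVelocityError Q Qh Ω Ωh t)) where
  toIsPerformanceFunction := hξ
  k_pos := hk
  γ_pos := hγ
  σ_pos := by linarith
  B_pos := div_pos two_pos hm
  hasDerivAt_e t ht := hφ t ht ▸ h.hasDerivAt_one_sub_fst_attitudeError ht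
  hasDerivAt_K t ht := hφ t ht ▸ h.hasDerivAt_kineticEnergy hJ ht
  p_sq_le t ht := by
    have hmw := hmJ (angularVelocityError Q Qh Ω Ωh t)
    rw [← le_div_iff₀' hm] at hmw
    calc _ ≤ _ := sq_dotProduct_le _ _
      _ ≤ angularVelocityError Q Qh Ω Ωh t ⬝ᵥ angularVelocityError Q Qh Ω Ωh t :=
        mul_le_of_le_one_left (Finset.sum_nonneg fun _ _ => mul_self_nonneg _)
          (h.snd_dotProduct_snd_attitudeError_le_one ht)
      _ ≤ _ := hmw.trans_eq (by ring)
  e_nonneg t ht := sub_nonneg.mpr (h.fst_attitudeError_le_one ht)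
  e_le t ht := by linarith [hsign t ht]
  e_lt := hlt

end IsAttitudeObserver

/-! ### Guaranteed performance -/

theorem observer_guaranteed_performance_general {J : Matrix (Fin 3) (Fin 3) ℝ} (hJ : J.PosDef)
    {k γ δ ξmin s : ℝ} (hk : 0 < k) (hγ : 0 < γ) (hs : -1 < s) {ξ ξ' : ℝ → ℝ}
    (hξ : IsPerformanceFunction ξmin ξ ξ') {Q Qh : ℝ → Quat4} {Ω Ω' Ωh Ωh' τ : ℝ → V3}
    (h : IsAttitudeObserver J k γ
      (fun t => correctionGain δ (ξ t) (1 - (attitudeError Q Qh t).1)) Q Qh Ω Ω' Ωh Ωh' τ)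
    (hΩ : ∃ C, ∀ t ≥ 0, vnorm (Ω t) ≤ C) (hsign : ∀ t ≥ 0, s ≤ (attitudeError Q Qh t).1)
    (hlt : ∀ t ≥ 0, 1 - (attitudeError Q Qh t).1 < δ * ξ t) :
    ((∃ M, ∀ t ≥ 0, |transformedError δ (ξ t) (1 - (attitudeError Q Qh t).1)| ≤ M) ∧
      (∃ M, ∀ t ≥ 0, |1 - (attitudeError Q Qh t).1| ≤ M) ∧
      (∃ M, ∀ t ≥ 0, vnorm (Ωh t) ≤ M)) ∧
    (Tendsto (fun t => transformedError δ (ξ t) (1 - (attitudeError Q Qh t).1)) atTop (nhds 0) ∧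
      Tendsto (fun t => 1 - (attitudeError Q Qh t).1) atTop (nhds 0) ∧
      Tendsto (fun t => (attitudeError Q Qh t).2) atTop (nhds 0) ∧
      Tendsto (fun t => (attitudeError Q Qh t).1) atTop (nhds 1) ∧
      Tendsto (angularVelocityError Q Qh Ω Ωh) atTop (nhds 0)) := by
  obtain ⟨m, hm, hmJ⟩ := exists_mul_dotProduct_self_le_of_posDef hJ
  have hsys := h.isEnvelopedErrorSystem (fun _ _ => rfl)
    ((conjTranspose_eq_transpose_of_trivial J).symm.trans hJ.isHermitian) hm hmJ hk hγ hs hξ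
    hsign hlt
  have he := hsys.tendsto_e
  have hE0 (t : ℝ) (ht : 0 ≤ t) :=
    transformedError_nonneg (hsys.ξ_pos ht) (hsys.e_nonneg t ht) (hlt t ht)
  have hφ1 (t : ℝ) (ht : 0 ≤ t) :=
    one_le_correctionGain (hsys.ξ_pos ht) (hsys.e_nonneg t ht) (hlt t ht)
  obtain ⟨M, hM⟩ := hsys.exists_transformedError_le
  obtain ⟨Φ, hΦ⟩ := hsys.exists_correctionGain_le
  obtain ⟨κ, hκ⟩ := hsys.exists_K_le
  have hw : ∃ C, ∀ t ≥ 0, vnorm (angularVelocityError Q Qh Ω Ωh t) ≤ C := by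
    refine ⟨√(2 * κ / m), fun t ht => Real.sqrt_le_sqrt ?_⟩
    rw [le_div_iff₀' hm]
    linarith [hmJ (angularVelocityError Q Qh Ω Ωh t), hκ t ht]
  refine ⟨⟨⟨M, fun t ht => ?_⟩, ⟨2, fun t ht => ?_⟩, h.exists_vnorm_Ωh_le hΩ hw⟩,
    hsys.tendsto_transformedError, he, h.tendsto_snd_attitudeError he,
    by simpa using he.const_sub 1,
    h.tendsto_angularVelocityError ((isUnit_iff_isUnit_det J).mp hJ.isUnit) hΩ hw
      ⟨Φ, fun t ht => ?_⟩ he⟩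
  · exact (abs_of_nonneg (hE0 t ht)).trans_le (hM t ht)
  · exact (abs_of_nonneg (hsys.e_nonneg t ht)).trans_le (by linarith [hsign t ht])
  · exact (Real.norm_of_nonneg (zero_le_one.trans (hφ1 t ht))).trans_le (hΦ t ht)

/-- Theorem 1 (full-state attitude observer with guaranteed performance, noise-free
measurements): under the true rigid-body dynamics and the proposed observer with
prescribed performance, (1) `E_o`, `e_o` and `Ω̂` are bounded on `[0,∞)`, and
(2) `E_o, e_o, q̃_o, Ω̃_o → 0` and `q̃_{o0} → 1` as `t → ∞`. -/
theorem observer_guaranteed_performance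
    (J : Matrix (Fin 3) (Fin 3) ℝ) (hJ : J.PosDef)
    (ℓo ko γo ξo0 ξoInf δo : ℝ)
    (hℓo : 0 < ℓo) (hko : ℓo ≤ ko) (hγo : 0 < γo)
    (hξ1 : ξo0 > ξoInf) (hξ2 : ξoInf > 0) (hδo : 0 < δo)
    -- true state, observer state, torque
    (Q Qh : ℝ → Quat4) (Ω Ωh τ : ℝ → V3)
    (hUQ : ∀ t ≥ (0 : ℝ), isUnitQuat (Q t)) (hUQh : ∀ t ≥ (0 : ℝ), isUnitQuat (Qh t))
    -- observation error `Q̃_o = Q̂⁻¹ ⊙ Q`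
    (Qtil : ℝ → Quat4) (hQtil : ∀ t, Qtil t = qmul (qinv (Qh t)) (Q t))
    -- inertia matrix and torque expressed in the observer frame
    (Jh : ℝ → Matrix (Fin 3) (Fin 3) ℝ) (hJh : ∀ t, Jh t = rotQ (Qtil t) * J * (rotQ (Qtil t))ᵀ)
    (τh : ℝ → V3) (hτh : ∀ t, τh t = rotQ (Qtil t) *ᵥ τ t)
    -- prescribed performance function and transformed error
    (ξo : ℝ → ℝ) (hξo : ∀ t, ξo t = (ξo0 - ξoInf) * Real.exp (-ℓo * t) + ξoInf)
    (eo : ℝ → ℝ) (heo : ∀ t, eo t = 1 - (Qtil t).1)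
    (Eo : ℝ → ℝ)
    (hEo : ∀ t, Eo t = 1 / 2 * Real.log ((δo + eo t / ξo t) / (δo - eo t / ξo t)))
    (Δo : ℝ → ℝ)
    (hΔo : ∀ t, Δo t = 1 / (2 * ξo t) * (1 / (δo + eo t / ξo t) + 1 / (δo - eo t / ξo t)))
    -- correction factors
    (WΩ Wτ : ℝ → V3)
    (hWΩ : ∀ t, WΩ t = -((ko * (Eo t * Δo t + 1)) • (rotQ (Qtil t) *ᵥ (Qtil t).2)))
    (hWτ : ∀ t, Wτ t = -((γo * (Eo t * Δo t + 1)) • (rotQ (Qtil t) *ᵥ (Qtil t).2)))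
    -- true dynamics: `Q̇ = ½ Q ⊙ (0,Ω)`, `JΩ̇ = (JΩ)×Ω + τ`
    (hQdyn : ∀ t ≥ (0 : ℝ), HasDerivAt Q ((1 / 2 : ℝ) • qmul (Q t) (qpure (Ω t))) t)
    (Ω' : ℝ → V3) (hΩd : ∀ t ≥ (0 : ℝ), HasDerivAt Ω (Ω' t) t)
    (hΩdyn : ∀ t ≥ (0 : ℝ), J *ᵥ Ω' t = crossProduct (J *ᵥ Ω t) (Ω t) + τ t)
    -- observer dynamics: `Q̂̇ = ½ Q̂ ⊙ (0, Ω̂ + W_Ω)`,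
    -- `ĴΩ̂̇ = (ĴΩ̂)×Ω̂ + τ̂ + Ĵ(Ω̂ × W_Ω) + W_τ`
    (hQhdyn : ∀ t ≥ (0 : ℝ), HasDerivAt Qh ((1 / 2 : ℝ) • qmul (Qh t) (qpure (Ωh t + WΩ t))) t)
    (Ωh' : ℝ → V3) (hΩhd : ∀ t ≥ (0 : ℝ), HasDerivAt Ωh (Ωh' t) t)
    (hΩhdyn : ∀ t ≥ (0 : ℝ), Jh t *ᵥ Ωh' t
      = crossProduct (Jh t *ᵥ Ωh t) (Ωh t) + τh t + Jh t *ᵥ crossProduct (Ωh t) (WΩ t) + Wτ t)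
    -- boundedness of the true angular velocity, and initial/performance conditions
    (hΩbdd : ∃ C, ∀ t ≥ (0 : ℝ), vnorm (Ω t) ≤ C)
    (hδinit : δo > eo 0) (hξinit : ξo0 > eo 0)
    (hsign : ∀ t ≥ (0 : ℝ), 0 ≤ (Qtil t).1)
    (hcon : ∀ t ≥ (0 : ℝ), 0 ≤ eo t ∧ eo t < δo * ξo t) :
    -- (1) boundedness
    ((∃ M, ∀ t ≥ (0 : ℝ), |Eo t| ≤ M) ∧ (∃ M, ∀ t ≥ (0 : ℝ), |eo t| ≤ M) ∧
      (∃ M, ∀ t ≥ (0 : ℝ), vnorm (Ωh t) ≤ M)) ∧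
    -- (2) asymptotic convergence
    (Tendsto Eo atTop (nhds 0) ∧ Tendsto eo atTop (nhds 0) ∧
      Tendsto (fun t => (Qtil t).2) atTop (nhds 0) ∧
      Tendsto (fun t => (Qtil t).1) atTop (nhds 1) ∧
      Tendsto (fun t => Ω t - (rotQ (Qtil t))ᵀ *ᵥ Ωh t) atTop (nhds 0)) := by
  obtain rfl : Qtil = attitudeError Q Qh := funext hQtil
  obtain rfl : eo = fun t => 1 - (attitudeError Q Qh t).1 := funext heo
  obtain rfl := funext hξo
  obtain rfl := funext hEo
  obtain rfl := funext hΔo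
  obtain rfl := funext hWΩ
  obtain rfl := funext hWτ
  obtain rfl := funext hJh
  obtain rfl := funext hτh
  exact observer_guaranteed_performance_general hJ (hℓo.trans_le hko) hγo neg_one_lt_zero
    (isPerformanceFunction_exp hℓo.le hξ2 hξ1.le)
    ⟨hUQ, hUQh, hQdyn, hQhdyn, hΩd, hΩdyn, hΩhd, hΩhdyn⟩ hΩbdd hsign fun t ht => (hcon t ht).2
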